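/- (Excess risk upper bound under the smooth relative signal margin condition.) Let ε ∈ [0,1], α > 0, C_α > 0. Let (P_X, η, η̃) satisfy the (ε, α, C_α)-smooth relative signal margin condition: for all κ > 0, P_X({x : M(x; η, η̃) ≤ κ}) ≤ C_α·κ^α + ε. Let F be a class of measurable classifiers f : 𝒳 → {1,…,K} with Natarajan dimension V containing the noisy Bayes classifier f̃*, and let f̂ ∈ argmin_{f ∈ F} (1/n) Σ_{i=1}^n 1{f(X_i) ≠ Ỹ_i} be an empirical risk minimizer over an i.i.d. sample Z^n from P_{XỸ}. Then, assuming all maps involved are measurable, E_{Z^n}[ R(f̂) − R(f*) ] ≤ ε + inf_{κ > 0} { C_α·κ^α + (1/κ)·16·√( (V·log n + 2V·log K + 4) / (2n) ) }. -/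

import Mathlib

open MeasureTheory ENNReal

noncomputable section

/-- The probability simplex `Δ^K`. -/
def simplex (K : ℕ) : Set (Fin K → ℝ) :=
  {p | (∀ i, 0 ≤ p i) ∧ ∑ i, p i = 1}

/-- Relative signal strength `M(x; η, η̃)`, where any ratio with zero denominator
(including `0/0`) is taken to be `+∞`. -/
def RSS {K : ℕ} (η ηt : Fin K → ℝ) : ℝ≥0∞ :=
  ⨅ j : Fin K,
    if (⨆ i, η i) - η j = 0 then ⊤
    else ENNReal.ofReal (((⨆ i, ηt i) - ηt j) / ((⨆ i, η i) - η j))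

/-- `A_κ`, the region where the relative signal strength exceeds `κ`. -/
def signalRegion {X : Type*} {K : ℕ} (η ηt : X → Fin K → ℝ) (κ : ℝ) : Set X :=
  {x | ENNReal.ofReal κ < RSS (η x) (ηt x)}

/-- The risk `R(f) = ∫ (1 - [η(x)]_{f(x)}) dP_X(x)` of a classifier `f`. -/
def risk {X : Type*} [MeasurableSpace X] {K : ℕ} (P : Measure X)
    (η : X → Fin K → ℝ) (f : X → Fin K) : ℝ :=
  ∫ x, (1 - η x (f x)) ∂P

/-- The Bayes risk `R(f^*) = ∫ (1 - max_i [η(x)]_i) dP_X(x)`. -/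
def bayesRisk {X : Type*} [MeasurableSpace X] {K : ℕ} (P : Measure X)
    (η : X → Fin K → ℝ) : ℝ :=
  ∫ x, (1 - ⨆ i, η x i) ∂P

/-- The noisy joint distribution `P_{XỸ}` on `𝒳 × {1,…,K}`, determined by
`P_{XỸ}(A × {j}) = ∫_A [η̃(x)]_j dP_X(x)`. -/
def jointMeasure {X : Type*} [MeasurableSpace X] {K : ℕ} (P : Measure X)
    (ηt : X → Fin K → ℝ) : Measure (X × Fin K) :=
  ∑ j : Fin K, ((P.withDensity fun x => ENNReal.ofReal (ηt x j)).map fun x => (x, j))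


/-- The set of indices attaining the maximum of `v`. -/
def argmaxSet {K : ℕ} (v : Fin K → ℝ) : Set (Fin K) :=
  {i | v i = ⨆ j, v j}

/-- A finite set `C` is (Natarajan-)shattered by `F` if there are `g, h` disagreeing
everywhere on `C` such that every `{g,h}`-valued pattern on `C` is realized by some
member of `F`. -/
def NShatters {X : Type*} {K : ℕ} (F : Set (X → Fin K)) (C : Finset X) : Prop :=
  ∃ g h : X → Fin K, (∀ x ∈ C, g x ≠ h x) ∧
    ∀ v : X → Fin K, (∀ x ∈ C, v x = g x ∨ v x = h x) →
      ∃ f ∈ F, ∀ x ∈ C, f x = v x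

/-!
Where the relative signal strength exceeds `κ`, the excess risk of a classifier at a point is at
most `1 / κ` times its noisy excess risk there; elsewhere it is at most `1`. Hence the excess risk
is bounded by `P {M ≤ κ} + (noisy excess risk) / κ`. Empirical risk minimization on noisy labels
makes the noisy excess risk at most the generalization gap, which a ghost sample and random
exchanges of training and ghost points turn into a Rademacher average. By Massart's lemma that
average is controlled by the logarithm of the number of labellings of `2n` points, and by
Natarajan's lemma there are at most `(1 + 2n K (K - 1)) ^ V ≤ (n K ^ 4) ^ V` of them.
-/

section Covers

variable {X β : Type*}

/-- A finite set `H` of labellings covers `F` on `C` if every member of `F` agrees on `C` with some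
member of `H`. Thus `#H` bounds the number of labellings `F_C` of `C`; members of `H` need not
belong to `F`. -/
def CoversOn (H : Finset (X → β)) (F : Set (X → β)) (C : Finset X) : Prop :=
  ∀ f ∈ F, ∃ h ∈ H, Set.EqOn h f C

/-- The members of `F` with label `i` at `a` that agree on `C` with a member of `F` whose label at
`a` is `j`. A subset of `C` shattered by this class can be enlarged by `a` when `i ≠ j`, which
drives the induction in Natarajan's lemma. -/
def labelSplit (F : Set (X → β)) (C : Finset X) (a : X) (i j : β) : Set (X → β) :=
  {f ∈ F | f a = i ∧ ∃ g ∈ F, g a = j ∧ Set.EqOn g f C}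

theorem exists_coversOn_card_le_one {F : Set (X → β)} {C : Finset X}
    (hF : ∀ f ∈ F, ∀ g ∈ F, Set.EqOn f g C) :
    ∃ H : Finset (X → β), H.card ≤ 1 ∧ CoversOn H F C := by
  rcases F.eq_empty_or_nonempty with rfl | ⟨f, hf⟩
  · exact ⟨∅, by simp, by simp [CoversOn]⟩
  · exact ⟨{f}, by simp, fun g hg => ⟨f, by simp, hF f hf g hg⟩⟩

-- Keep one label at `a` for each labelling of `C`; a member of `F` with another label at `a` lies
-- in a `labelSplit`, and is covered by a cover of that class with the value at `a` overwritten.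
theorem exists_coversOn_insert [DecidableEq X] [Fintype β] {F : Set (X → β)}
    {C : Finset X} {a : X} {H₀ : Finset (X → β)} (hH₀ : CoversOn H₀ F C)
    {H : β × β → Finset (X → β)}
    (hH : ∀ q ∈ Finset.univ.offDiag, CoversOn (H q) (labelSplit F C a q.1 q.2) C) :
    ∃ H' : Finset (X → β), CoversOn H' F (insert a C) ∧
      H'.card ≤ H₀.card + ∑ q ∈ Finset.univ.offDiag, (H q).card := by
  classical
  have exists_label : ∀ h : X → β, ∃ b : β,
      (∃ f ∈ F, Set.EqOn h f C) → ∃ g ∈ F, Set.EqOn h g C ∧ g a = b := by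
    intro h
    by_cases hex : ∃ f ∈ F, Set.EqOn h f C
    · obtain ⟨f, hf, hhf⟩ := hex
      exact ⟨f a, fun _ => ⟨f, hf, hhf, rfl⟩⟩
    · exact ⟨h a, fun hex' => absurd hex' hex⟩
  choose label hlabel using exists_label
  have eqOn_update : ∀ {h f : X → β}, Set.EqOn h f C →
      Set.EqOn (Function.update h a (f a)) f ↑(insert a C) := by
    intro h f hhf x hx
    rcases eq_or_ne x a with rfl | hxa
    · simp
    · rw [Function.update_of_ne hxa]
      exact hhf ((Finset.mem_insert.mp hx).resolve_left hxa)
  refine ⟨H₀.image (fun h => Function.update h a (label h)) ∪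
    Finset.univ.offDiag.biUnion fun q => (H q).image fun h => Function.update h a q.1, ?_, ?_⟩
  · intro f hf
    obtain ⟨h, hh, hhf⟩ := hH₀ f hf
    obtain ⟨g, hg, hhg, hga⟩ := hlabel h ⟨f, hf, hhf⟩
    by_cases hfa : f a = label h
    · exact ⟨_, Finset.mem_union_left _ (Finset.mem_image_of_mem _ hh), hfa ▸ eqOn_update hhf⟩
    · have hq : (f a, label h) ∈ (Finset.univ : Finset β).offDiag := by simpa using hfa
      obtain ⟨h', hh', hh'f⟩ := hH _ hq f ⟨hf, rfl, g, hg, hga, hhg.symm.trans hhf⟩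
      exact ⟨_, Finset.mem_union_right _
        (Finset.mem_biUnion.mpr ⟨_, hq, Finset.mem_image_of_mem _ hh'⟩), eqOn_update hh'f⟩
  · refine (Finset.card_union_le _ _).trans (add_le_add Finset.card_image_le ?_)
    exact Finset.card_biUnion_le.trans (Finset.sum_le_sum fun q _ => Finset.card_image_le)

end Covers

section Natarajan

variable {X : Type*} {K : ℕ} {F : Set (X → Fin K)} {C S : Finset X} {a : X}

theorem nShatters_singleton {f g : X → Fin K} (hf : f ∈ F) (hg : g ∈ F) (hne : f a ≠ g a) :
    NShatters F {a} := by
  refine ⟨f, g, by simpa using hne, fun v hv => ?_⟩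
  rcases hv a (Finset.mem_singleton_self a) with hva | hva
  · exact ⟨f, hf, by simp [hva]⟩
  · exact ⟨g, hg, by simp [hva]⟩

theorem NShatters.insert_of_labelSplit [DecidableEq X] {i j : Fin K} (hij : i ≠ j) (ha : a ∉ C)
    (hSC : S ⊆ C) (hS : NShatters (labelSplit F C a i j) S) : NShatters F (insert a S) := by
  obtain ⟨g, h, hne, hreal⟩ := hS
  have ne_a : ∀ x ∈ S, x ≠ a := fun x hx hxa => ha (hxa ▸ hSC hx)
  refine ⟨Function.update g a i, Function.update h a j, fun x hx => ?_, fun v hv => ?_⟩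
  · rcases Finset.mem_insert.mp hx with rfl | hxS
    · simpa using hij
    · simpa [ne_a x hxS] using hne x hxS
  · obtain ⟨f, ⟨hf, hfa, f', hf', hf'a, hf'f⟩, hfv⟩ := hreal v fun x hx => by
      simpa [ne_a x hx] using hv x (Finset.mem_insert_of_mem hx)
    have hva : v a = i ∨ v a = j := by simpa using hv a (Finset.mem_insert_self a S)
    rcases hva with hva | hva
    · exact ⟨f, hf, (Finset.forall_mem_insert ..).mpr ⟨hfa.trans hva.symm, hfv⟩⟩
    · exact ⟨f', hf', (Finset.forall_mem_insert ..).mpr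
        ⟨hf'a.trans hva.symm, fun x hx => (hf'f (hSC hx)).trans (hfv x hx)⟩⟩

theorem NShatters.card_le_of_labelSplit [DecidableEq X] {d : ℕ}
    (hF : ∀ S ⊆ insert a C, NShatters F S → S.card ≤ d + 1) {i j : Fin K} (hij : i ≠ j)
    (ha : a ∉ C) (hSC : S ⊆ C) (hS : NShatters (labelSplit F C a i j) S) : S.card ≤ d := by
  refine Nat.le_of_succ_le_succ ?_
  rw [Nat.succ_eq_add_one, ← Finset.card_insert_of_notMem fun haS => ha (hSC haS)]
  exact hF _ (Finset.insert_subset_insert a hSC) (hS.insert_of_labelSplit hij ha hSC)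

theorem pow_succ_add_mul_pow_le (c m d : ℕ) :
    (1 + c * m) ^ (d + 1) + m * (1 + c * m) ^ d ≤ (1 + (c + 1) * m) ^ (d + 1) :=
  calc (1 + c * m) ^ (d + 1) + m * (1 + c * m) ^ d
      = (1 + c * m) ^ d * (1 + (c + 1) * m) := by ring
    _ ≤ (1 + (c + 1) * m) ^ d * (1 + (c + 1) * m) := by gcongr; omega
    _ = (1 + (c + 1) * m) ^ (d + 1) := (pow_succ _ _).symm

/-- **Natarajan's lemma**, in the form of a bound on covers. -/
theorem exists_coversOn_card_le (C : Finset X) (d : ℕ) (F : Set (X → Fin K))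
    (hF : ∀ S ⊆ C, NShatters F S → S.card ≤ d) :
    ∃ H : Finset (X → Fin K), CoversOn H F C ∧ H.card ≤ (1 + C.card * (K * (K - 1))) ^ d := by
  classical
  induction C using Finset.induction_on generalizing d F with
  | empty =>
    obtain ⟨H, hcard, hH⟩ := exists_coversOn_card_le_one (F := F) (C := ∅) (by simp)
    exact ⟨H, hH, by simpa using hcard⟩
  | insert a C ha ih =>
    cases d with
    | zero =>
      obtain ⟨H, hcard, hH⟩ := exists_coversOn_card_le_one (F := F) (C := insert a C)
        fun f hf g hg x hx => by
          by_contra hne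
          simpa using hF {x} (by simpa using hx) (nShatters_singleton hf hg hne)
      exact ⟨H, hH, by simpa using hcard⟩
    | succ d =>
      obtain ⟨H₀, hH₀, hcard₀⟩ := ih (d + 1) F fun S hS =>
        hF S (hS.trans (Finset.subset_insert a C))
      have cover_split : ∀ q ∈ (Finset.univ : Finset (Fin K)).offDiag,
          ∃ H, CoversOn H (labelSplit F C a q.1 q.2) C ∧
            H.card ≤ (1 + C.card * (K * (K - 1))) ^ d := fun q hq =>
        ih d _ fun S hS => NShatters.card_le_of_labelSplit hF (Finset.mem_offDiag.mp hq).2.2 ha hS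
      choose! H hH hcard using cover_split
      obtain ⟨H', hH', hcard'⟩ := exists_coversOn_insert hH₀ hH
      have card_pairs : (Finset.univ : Finset (Fin K)).offDiag.card = K * (K - 1) := by
        rw [Finset.offDiag_card, Finset.card_fin, Nat.mul_sub_one]
      have card_splits := Finset.sum_le_card_nsmul _ _ _ hcard
      rw [card_pairs, smul_eq_mul] at card_splits
      rw [Finset.card_insert_of_notMem ha]
      exact ⟨H', hH', hcard'.trans <| (add_le_add hcard₀ card_splits).trans <|
        pow_succ_add_mul_pow_le _ _ _⟩

end Natarajan

section SubgaussianMaximum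

open ProbabilityTheory

theorem le_sqrt_of_forall_mul_le {y c L : ℝ} (hc : 0 ≤ c) (hL : 0 ≤ L)
    (h : ∀ l > 0, l * y ≤ L + c * l ^ 2 / 2) : y ≤ √(2 * c * L) := by
  rcases le_or_gt y 0 with hy | hy
  · exact hy.trans (Real.sqrt_nonneg _)
  refine Real.le_sqrt_of_sq_le ?_
  rcases hc.eq_or_lt with rfl | hc
  · have := h ((L + 1) / y) (by positivity)
    rw [div_mul_cancel₀ _ hy.ne'] at this
    linarith
  · have hopt := h (y / c) (by positivity)
    field_simp at hopt
    linarith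

variable {ι Ω : Type*} [MeasurableSpace Ω] {μ : Measure Ω} [IsProbabilityMeasure μ]

/-- **Massart's maximal inequality** for sub-Gaussian variables. -/
theorem integral_le_sqrt_log_card {T : Finset ι} {X : ι → Ω → ℝ} {c : NNReal}
    (hX : ∀ t ∈ T, HasSubgaussianMGF (X t) c μ) {Y : Ω → ℝ} (hY : Integrable Y μ)
    (hYX : ∀ ω, ∃ t ∈ T, Y ω ≤ X t ω) : ∫ ω, Y ω ∂μ ≤ √(2 * c * Real.log T.card) := by
  obtain ⟨ω₀⟩ := nonempty_of_isProbabilityMeasure μ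
  have hT : (0 : ℝ) < T.card := by
    obtain ⟨t, ht, -⟩ := hYX ω₀
    exact_mod_cast Finset.card_pos.mpr ⟨t, ht⟩
  refine le_sqrt_of_forall_mul_le c.2 (Real.log_natCast_nonneg _) fun l hl => ?_
  set A := Real.log T.card + c * l ^ 2 / 2 with hA
  have hexp : ∀ t ∈ T, Integrable (fun ω => Real.exp (l * X t ω)) μ := fun t ht =>
    (hX t ht).integrable_exp_mul l
  -- The tangent line of `exp` at `A` replaces Jensen's inequality, which would require
  -- `exp (l * Y)` to be integrable.
  have pointwise : ∀ ω, Real.exp A * (l * Y ω + (1 - A)) ≤ ∑ t ∈ T, Real.exp (l * X t ω) := by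
    intro ω
    obtain ⟨t, ht, hYt⟩ := hYX ω
    calc Real.exp A * (l * Y ω + (1 - A))
        ≤ Real.exp A * Real.exp (l * Y ω - A) := by
          gcongr
          linarith [Real.add_one_le_exp (l * Y ω - A)]
      _ = Real.exp (l * Y ω) := by rw [← Real.exp_add, add_sub_cancel]
      _ ≤ Real.exp (l * X t ω) := by gcongr
      _ ≤ ∑ t ∈ T, Real.exp (l * X t ω) :=
        Finset.single_le_sum (f := fun t => Real.exp (l * X t ω))
          (fun _ _ => (Real.exp_pos _).le) ht
  have integral_tangent : ∫ ω, (l * Y ω + (1 - A)) ∂μ = l * ∫ ω, Y ω ∂μ + (1 - A) := by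
    rw [integral_add (hY.const_mul l) (integrable_const _), integral_const_mul]
    simp
  have integrated : Real.exp A * (l * ∫ ω, Y ω ∂μ + (1 - A)) ≤ Real.exp A * 1 :=
    calc Real.exp A * (l * ∫ ω, Y ω ∂μ + (1 - A))
        = ∫ ω, Real.exp A * (l * Y ω + (1 - A)) ∂μ := by rw [integral_const_mul, integral_tangent]
      _ ≤ ∫ ω, ∑ t ∈ T, Real.exp (l * X t ω) ∂μ :=
        integral_mono (((hY.const_mul l).add (integrable_const _)).const_mul _)
          (integrable_finsetSum _ hexp) pointwise
      _ = ∑ t ∈ T, mgf (X t) μ l := integral_finsetSum _ hexp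
      _ ≤ ∑ t ∈ T, Real.exp (c * l ^ 2 / 2) := Finset.sum_le_sum fun t ht => (hX t ht).mgf_le l
      _ = Real.exp A * 1 := by
        rw [hA, Real.exp_add, Real.exp_log hT, Finset.sum_const, nsmul_eq_mul, mul_one]
  linarith [le_of_mul_le_mul_left integrated (Real.exp_pos A)]

end SubgaussianMaximum

section Rademacher

open ProbabilityTheory

variable {ι : Type*} [Fintype ι]

/-- The sign `±1` encoded by a Boolean. -/
def boolSign (b : Bool) : ℝ := bif b then 1 else -1

/-- The law of a family of independent fair coin flips; composed with `boolSign`, these are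
independent Rademacher variables. -/
def fairCoins (ι : Type*) [Fintype ι] : Measure (ι → Bool) :=
  Measure.pi fun _ => (PMF.uniformOfFintype Bool).toMeasure

instance : IsProbabilityMeasure (fairCoins ι) := by
  unfold fairCoins
  infer_instance

theorem hasSubgaussianMGF_boolSign_mul {u : ℝ} (hu : |u| ≤ 1) :
    HasSubgaussianMGF (fun b => boolSign b * u) 1 (PMF.uniformOfFintype Bool).toMeasure := by
  have mem_Icc : ∀ b, boolSign b * u ∈ Set.Icc (-1) 1 := by
    rintro (_ | _) <;> simpa [boolSign, and_comm, neg_le] using abs_le.mp hu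
  have integral_zero : ∫ b, boolSign b * u ∂(PMF.uniformOfFintype Bool).toMeasure = 0 := by
    simp [PMF.integral_eq_sum, boolSign]
  convert hasSubgaussianMGF_of_mem_Icc_of_integral_eq_zero
    (Measurable.of_discrete (f := fun b => boolSign b * u)).aemeasurable
    (ae_of_all _ mem_Icc) integral_zero using 1
  rw [sub_neg_eq_add, one_add_one_eq_two, Real.nnnorm_ofNat, div_self two_ne_zero, one_pow]

theorem hasSubgaussianMGF_sum_boolSign_mul {u : ι → ℝ} (hu : ∀ i, |u i| ≤ 1) :
    HasSubgaussianMGF (fun σ : ι → Bool => ∑ i, boolSign (σ i) * u i) (Fintype.card ι)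
      (fairCoins ι) := by
  have indep : iIndepFun (fun i (σ : ι → Bool) => boolSign (σ i) * u i) (fairCoins ι) :=
    iIndepFun_pi fun i => (Measurable.of_discrete (f := fun b => boolSign b * u i)).aemeasurable
  have subgaussian : ∀ i, HasSubgaussianMGF (fun σ : ι → Bool => boolSign (σ i) * u i) 1
      (fairCoins ι) := fun i =>
    HasSubgaussianMGF.of_map (Y := fun σ : ι → Bool => σ i) (X := fun b => boolSign b * u i)
      (measurable_pi_apply i).aemeasurable <| by
        rw [fairCoins, (measurePreserving_eval _ i).map_eq]
        exact hasSubgaussianMGF_boolSign_mul (hu i)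
  simpa using HasSubgaussianMGF.sum_of_iIndepFun indep fun i (_ : i ∈ Finset.univ) => subgaussian i

/-- **Massart's finite class lemma**, with the maximum over the class replaced by an arbitrary
sign-dependent choice `u` of a vector. -/
theorem integral_sum_boolSign_mul_le {u : (ι → Bool) → ι → ℝ} (hu : ∀ σ i, |u σ i| ≤ 1) :
    ∫ σ, ∑ i, boolSign (σ i) * u σ i ∂fairCoins ι ≤
      √(2 * Fintype.card ι * Real.log (Set.range u).ncard) := by
  classical
  have hX : ∀ t ∈ (Finset.univ.image u : Finset (ι → ℝ)),
      HasSubgaussianMGF (fun σ : ι → Bool => ∑ i, boolSign (σ i) * t i) (Fintype.card ι)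
        (fairCoins ι) := by
    simpa using fun σ => hasSubgaussianMGF_sum_boolSign_mul (hu σ)
  have := integral_le_sqrt_log_card hX (Integrable.of_finite (f := fun σ =>
    ∑ i, boolSign (σ i) * u σ i)) fun σ => ⟨u σ, by simp, le_rfl⟩
  rwa [← Set.ncard_coe_finset, Finset.coe_image, Finset.coe_univ, Set.image_univ] at this

end Rademacher

section Symmetrization

theorem abs_sub_le_one {x y : ℝ} (hx : x ∈ Set.Icc 0 1) (hy : y ∈ Set.Icc 0 1) : |x - y| ≤ 1 :=
  abs_le.mpr ⟨by linarith [hx.1, hy.2], by linarith [hx.2, hy.1]⟩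

variable {ι Z : Type*}

/-- The sample of pairs obtained from `w` by exchanging the two entries of the `i`-th pair
(a training point and its ghost) whenever the coin `σ i` is `false`. -/
def swapPairs (σ : ι → Bool) (w : ι → Z × Z) (i : ι) : Z × Z :=
  bif σ i then w i else (w i).swap

theorem sub_swapPairs (h : Z → ℝ) (σ : ι → Bool) (w : ι → Z × Z) (i : ι) :
    h (swapPairs σ w i).2 - h (swapPairs σ w i).1 = boolSign (σ i) * (h (w i).2 - h (w i).1) := by
  cases hσ : σ i <;> simp [swapPairs, boolSign, hσ]

variable [Fintype ι]

/-- The loss of the rule trained on the first entries of `w`, summed over the second entries (the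
ghost sample), minus its sum over the first entries (the training sample). Here `g z y` is the loss
at `y` of the rule trained on `z`. -/
def ghostGap (g : (ι → Z) → Z → ℝ) (w : ι → Z × Z) : ℝ :=
  ∑ i, (g (fun j => (w j).1) (w i).2 - g (fun j => (w j).1) (w i).1)

variable {g : (ι → Z) → Z → ℝ}

theorem norm_ghostGap_le (hg01 : ∀ z y, g z y ∈ Set.Icc 0 1) (w : ι → Z × Z) :
    ‖ghostGap g w‖ ≤ Fintype.card ι := by
  refine (norm_sum_le _ _).trans ((Finset.sum_le_card_nsmul _ _ 1 fun i _ => ?_).trans (by simp))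
  exact abs_sub_le_one (hg01 _ _) (hg01 _ _)

/-- An exchange flips the sign of the `i`-th term and changes the trained rule; since Massart's
lemma allows a sign-dependent vector, the dependence of the rule on the coins does no harm. -/
theorem integral_ghostGap_swapPairs_le (hg01 : ∀ z y, g z y ∈ Set.Icc 0 1) (w : ι → Z × Z) {N : ℕ}
    (hN : (Set.range fun z i => g z (w i).2 - g z (w i).1).encard ≤ N) :
    ∫ σ, ghostGap g (swapPairs σ w) ∂fairCoins ι ≤ √(2 * Fintype.card ι * Real.log N) := by
  let trained (σ : ι → Bool) : ι → Z := fun j => (swapPairs σ w j).1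
  let u (σ : ι → Bool) (i : ι) : ℝ := g (trained σ) (w i).2 - g (trained σ) (w i).1
  have hcard : (Set.range u).ncard ≤ N := by
    have hsub : Set.range u ⊆ Set.range fun z i => g z (w i).2 - g z (w i).1 :=
      Set.range_subset_iff.mpr fun σ => ⟨trained σ, rfl⟩
    exact_mod_cast (Set.ncard_le_encard _).trans ((Set.encard_le_encard hsub).trans hN)
  have hpos : 0 < (Set.range u).ncard :=
    (Set.ncard_pos (Set.finite_range u)).mpr (Set.range_nonempty u)
  calc ∫ σ, ghostGap g (swapPairs σ w) ∂fairCoins ι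
      = ∫ σ, ∑ i, boolSign (σ i) * u σ i ∂fairCoins ι := by
        simp only [ghostGap, sub_swapPairs, u, trained]
    _ ≤ √(2 * Fintype.card ι * Real.log (Set.range u).ncard) :=
        integral_sum_boolSign_mul_le fun σ i => abs_sub_le_one (hg01 _ _) (hg01 _ _)
    _ ≤ √(2 * Fintype.card ι * Real.log N) := by gcongr

variable [MeasurableSpace Z] (μ : Measure Z) [IsProbabilityMeasure μ]

theorem measurePreserving_swapPairs (σ : ι → Bool) :
    MeasurePreserving (swapPairs σ) (Measure.pi fun _ => μ.prod μ)
      (Measure.pi fun _ : ι => μ.prod μ) := by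
  refine measurePreserving_pi (f := fun i (p : Z × Z) => bif σ i then p else p.swap) _ _
    fun i => ?_
  cases σ i
  · exact Measure.measurePreserving_swap
  · exact MeasurePreserving.id _

theorem measurable_ghostGap (hg : Measurable fun p : (ι → Z) × Z => g p.1 p.2) :
    Measurable (ghostGap g) := by
  refine Finset.measurable_sum _ fun i _ => Measurable.sub ?_ ?_
  · exact hg.comp (f := fun w : ι → Z × Z => (fun j => (w j).1, (w i).2)) (by fun_prop)
  · exact hg.comp (f := fun w : ι → Z × Z => (fun j => (w j).1, (w i).1)) (by fun_prop)

variable {μ}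

/-- The ghost sample estimates the true risk of the trained rule without bias. -/
theorem integral_generalizationGap_eq_integral_ghostGap
    (hg : Measurable fun p : (ι → Z) × Z => g p.1 p.2) (hg01 : ∀ z y, g z y ∈ Set.Icc 0 1) :
    ∫ z, (Fintype.card ι * ∫ y, g z y ∂μ - ∑ i, g z (z i)) ∂Measure.pi (fun _ : ι => μ) =
      ∫ w, ghostGap g w ∂Measure.pi fun _ : ι => μ.prod μ := by
  let ν := Measure.pi fun _ : ι => μ
  have hpairs := measurePreserving_arrowProdEquivProdArrow Z Z ι (fun _ => μ) (fun _ => μ)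
  let gap (p : (ι → Z) × (ι → Z)) : ℝ := ∑ i, (g p.1 (p.2 i) - g p.1 (p.1 i))
  have gap_eq : ∀ p, gap p = ghostGap g ((MeasurableEquiv.arrowProdEquivProdArrow Z Z ι).symm p) :=
    fun _ => rfl
  have gap_integrable : Integrable gap (ν.prod ν) := by
    refine Integrable.of_bound ?_ (Fintype.card ι) (ae_of_all _ fun p => ?_)
    · exact ((measurable_ghostGap hg).comp
        (MeasurableEquiv.arrowProdEquivProdArrow Z Z ι).symm.measurable).aestronglyMeasurable
    · exact gap_eq p ▸ norm_ghostGap_le hg01 _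
  have hgz : ∀ z, Measurable (g z) := fun z => hg.comp measurable_prodMk_left
  have integrable_eval : ∀ z i, Integrable (fun z' : ι → Z => g z (z' i)) ν := fun z i =>
    .of_mem_Icc 0 1 ((hgz z).comp (measurable_pi_apply i)).aemeasurable
      (ae_of_all _ fun _ => hg01 _ _)
  have integral_eval : ∀ z i, ∫ z', g z (z' i) ∂ν = ∫ y, g z y ∂μ := fun z i =>
    integral_comp_eval (μ := fun _ => μ) (hgz z).aestronglyMeasurable
  have integrable_sub : ∀ z i, Integrable (fun z' : ι → Z => g z (z' i) - g z (z i)) ν := fun z i =>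
    (integrable_eval z i).sub (integrable_const _)
  calc ∫ z, (Fintype.card ι * ∫ y, g z y ∂μ - ∑ i, g z (z i)) ∂ν
      = ∫ z, ∫ z', gap (z, z') ∂ν ∂ν := by
        refine integral_congr_ae (ae_of_all _ fun z => ?_)
        simp only [gap]
        rw [integral_finsetSum _ fun i _ => integrable_sub z i]
        simp only [integral_sub (integrable_eval z _) (integrable_const _), Finset.sum_sub_distrib,
          integral_eval z]
        simp
    _ = ∫ p, gap p ∂ν.prod ν := (integral_prod gap gap_integrable).symm
    _ = ∫ w, ghostGap g w ∂Measure.pi fun _ : ι => μ.prod μ := (hpairs.integral_comp' gap).symm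

theorem integral_generalizationGap_le (hg : Measurable fun p : (ι → Z) × Z => g p.1 p.2)
    (hg01 : ∀ z y, g z y ∈ Set.Icc 0 1) {N : ℕ}
    (hN : ∀ w : ι → Z × Z, (Set.range fun z i => g z (w i).2 - g z (w i).1).encard ≤ N) :
    ∫ z, (Fintype.card ι * ∫ y, g z y ∂μ - ∑ i, g z (z i)) ∂Measure.pi (fun _ : ι => μ) ≤
      √(2 * Fintype.card ι * Real.log N) := by
  let Q := Measure.pi fun _ : ι => μ.prod μ
  have swap_invariant : ∀ σ, ∫ w, ghostGap g (swapPairs σ w) ∂Q = ∫ w, ghostGap g w ∂Q := by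
    intro σ
    have hσ := measurePreserving_swapPairs (ι := ι) μ σ
    rw [← integral_map hσ.measurable.aemeasurable (measurable_ghostGap hg).aestronglyMeasurable,
      hσ.map_eq]
  have hint : Integrable (fun p : (ι → Bool) × (ι → Z × Z) => ghostGap g (swapPairs p.1 p.2))
      ((fairCoins ι).prod Q) := by
    refine Integrable.of_bound (Measurable.aestronglyMeasurable ?_) (Fintype.card ι)
      (ae_of_all _ fun p => norm_ghostGap_le hg01 _)
    exact measurable_from_prod_countable_right fun σ =>
      (measurable_ghostGap hg).comp (measurePreserving_swapPairs μ σ).measurable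
  calc ∫ z, (Fintype.card ι * ∫ y, g z y ∂μ - ∑ i, g z (z i)) ∂Measure.pi (fun _ : ι => μ)
      = ∫ w, ghostGap g w ∂Q := integral_generalizationGap_eq_integral_ghostGap hg hg01
    _ = ∫ σ, ∫ w, ghostGap g (swapPairs σ w) ∂Q ∂fairCoins ι := by simp [swap_invariant]
    _ = ∫ w, ∫ σ, ghostGap g (swapPairs σ w) ∂fairCoins ι ∂Q := integral_integral_swap hint
    _ ≤ ∫ _, √(2 * Fintype.card ι * Real.log N) ∂Q :=
        integral_mono hint.integral_prod_right (integrable_const _) fun w =>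
          integral_ghostGap_swapPairs_le hg01 w (hN w)
    _ = √(2 * Fintype.card ι * Real.log N) := by simp [Q]

/-- A training rule whose empirical loss never exceeds that of a fixed `g₀` inherits the bound on
the generalization gap, because the empirical loss of `g₀` is unbiased. -/
theorem integral_excessLoss_le (hg : Measurable fun p : (ι → Z) × Z => g p.1 p.2)
    (hg01 : ∀ z y, g z y ∈ Set.Icc 0 1) {g₀ : Z → ℝ} (hg₀ : Integrable g₀ μ)
    (hle : ∀ z, ∑ i, g z (z i) ≤ ∑ i, g₀ (z i)) {N : ℕ}
    (hN : ∀ w : ι → Z × Z, (Set.range fun z i => g z (w i).2 - g z (w i).1).encard ≤ N) :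
    Fintype.card ι * ∫ z, (∫ y, g z y ∂μ - ∫ y, g₀ y ∂μ) ∂Measure.pi (fun _ : ι => μ) ≤
      √(2 * Fintype.card ι * Real.log N) := by
  let ν := Measure.pi fun _ : ι => μ
  have risk_integrable : Integrable (fun z => ∫ y, g z y ∂μ) ν :=
    (Integrable.of_mem_Icc (μ := ν.prod μ) 0 1 hg.aemeasurable
      (ae_of_all _ fun _ => hg01 _ _)).integral_prod_left
  have empirical_integrable : Integrable (fun z => ∑ i, g z (z i)) ν :=
    integrable_finsetSum _ fun i _ => .of_mem_Icc 0 1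
      (hg.comp (measurable_id.prodMk (measurable_pi_apply i))).aemeasurable
      (ae_of_all _ fun _ => hg01 _ _)
  have eval_integrable : ∀ i, Integrable (fun z : ι → Z => g₀ (z i)) ν := fun i =>
    integrable_comp_eval (μ := fun _ => μ) hg₀
  have empirical_unbiased : ∫ z, ∑ i, g₀ (z i) ∂ν = Fintype.card ι * ∫ y, g₀ y ∂μ := by
    rw [integral_finsetSum _ fun i _ => eval_integrable i]
    simp [ν, fun i => integral_comp_eval (μ := fun _ : ι => μ) (i := i) hg₀.aestronglyMeasurable]
  calc Fintype.card ι * ∫ z, (∫ y, g z y ∂μ - ∫ y, g₀ y ∂μ) ∂ν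
      = ∫ z, (Fintype.card ι * ∫ y, g z y ∂μ - ∑ i, g₀ (z i)) ∂ν := by
        rw [integral_sub risk_integrable (integrable_const _),
          integral_sub (risk_integrable.const_mul _)
            (integrable_finsetSum _ fun i _ => eval_integrable i),
          empirical_unbiased, integral_const_mul, mul_sub]
        simp
    _ ≤ ∫ z, (Fintype.card ι * ∫ y, g z y ∂μ - ∑ i, g z (z i)) ∂ν :=
        integral_mono ((risk_integrable.const_mul _).sub
            (integrable_finsetSum _ fun i _ => eval_integrable i))
          ((risk_integrable.const_mul _).sub empirical_integrable)
          fun z => sub_le_sub_left (hle z) _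
    _ ≤ √(2 * Fintype.card ι * Real.log N) := integral_generalizationGap_le hg hg01 hN

end Symmetrization

section Posterior

variable {X Y : Type*} [MeasurableSpace X] [MeasurableSpace Y] {K : ℕ}

theorem apply_mem_Icc_of_mem_simplex {p : Fin K → ℝ} (hp : p ∈ simplex K) (j : Fin K) :
    p j ∈ Set.Icc 0 1 :=
  ⟨hp.1 j, hp.2 ▸ Finset.single_le_sum (fun i _ => hp.1 i) (Finset.mem_univ j)⟩

theorem iSup_mem_Icc_of_mem_simplex {p : Fin K → ℝ} (hp : p ∈ simplex K) :
    ⨆ i, p i ∈ Set.Icc 0 1 :=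
  ⟨Real.iSup_nonneg hp.1,
    Real.iSup_le (fun i => (apply_mem_Icc_of_mem_simplex hp i).2) zero_le_one⟩

theorem measurable_apply_label {η : X → Fin K → ℝ} (hη : ∀ i, Measurable fun x => η x i)
    {g : Y → X} {l : Y → Fin K} (hg : Measurable g) (hl : Measurable l) :
    Measurable fun y => η (g y) (l y) :=
  (measurable_from_prod_countable_left hη : Measurable fun q : X × Fin K => η q.1 q.2).comp
    (hg.prodMk hl)

variable {P : Measure X} {η ηt : X → Fin K → ℝ}

theorem integral_jointMeasure (hηt : ∀ x j, 0 ≤ ηt x j) (hηtm : ∀ i, Measurable fun x => ηt x i)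
    {h : X × Fin K → ℝ} (hint : Integrable h (jointMeasure P ηt)) :
    ∫ y, h y ∂jointMeasure P ηt = ∫ x, ∑ j, ηt x j * h (x, j) ∂P := by
  have toReal_smul : ∀ x j, (ENNReal.ofReal (ηt x j)).toReal • h (x, j) = ηt x j * h (x, j) :=
    fun x j => by rw [ENNReal.toReal_ofReal (hηt x j), smul_eq_mul]
  have hmap : ∀ j : Fin K, Measurable fun x : X => (x, j) := fun _ => measurable_prodMk_right
  have hint_j := integrable_finsetSum_measure.mp hint
  have hm_j := fun j => (hint_j j (Finset.mem_univ j)).aestronglyMeasurable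
  have hint_smul : ∀ j, Integrable (fun x => ηt x j * h (x, j)) P := fun j => by
    have := (integrable_map_measure (hm_j j) (hmap j).aemeasurable).mp
      (hint_j j (Finset.mem_univ j))
    rw [integrable_withDensity_iff_integrable_smul' (hηtm j).ennreal_ofReal
      (ae_of_all _ fun _ => ENNReal.ofReal_lt_top)] at this
    simpa only [Function.comp_apply, toReal_smul] using this
  rw [integral_finsetSum _ fun j _ => hint_smul j]
  refine (integral_finsetSum_measure hint_j).trans (Finset.sum_congr rfl fun j _ => ?_)
  rw [integral_map (hmap j).aemeasurable (hm_j j),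
    integral_withDensity_eq_integral_toReal_smul (hηtm j).ennreal_ofReal
      (ae_of_all _ fun _ => ENNReal.ofReal_lt_top)]
  simp only [toReal_smul]

theorem measurable_RSS (hηm : ∀ i, Measurable fun x => η x i)
    (hηtm : ∀ i, Measurable fun x => ηt x i) : Measurable fun x => RSS (η x) (ηt x) := by
  have hgap : ∀ {θ : X → Fin K → ℝ}, (∀ i, Measurable fun x => θ x i) → ∀ j,
      Measurable fun x => (⨆ i, θ x i) - θ x j := fun hθ j => (Measurable.iSup hθ).sub (hθ j)
  exact .iInf fun j => .ite (measurableSet_eq_fun (hgap hηm j) measurable_const) measurable_const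
    ((hgap hηtm j).div (hgap hηm j)).ennreal_ofReal

theorem iSup_sub_le_of_lt_RSS {p q : Fin K → ℝ} {κ : ℝ} (hκ : 0 < κ)
    (h : ENNReal.ofReal κ < RSS p q) (j : Fin K) :
    (⨆ i, p i) - p j ≤ 1 / κ * ((⨆ i, q i) - q j) := by
  have hp := sub_nonneg.mpr (Finite.le_ciSup p j)
  have hq := sub_nonneg.mpr (Finite.le_ciSup q j)
  rcases hp.eq_or_lt with hzero | hpos
  · rw [← hzero]
    positivity
  · have hratio := h.trans_le (iInf_le _ j)
    rw [if_neg hpos.ne', ENNReal.ofReal_lt_ofReal_iff_of_nonneg hκ.le, lt_div_iff₀ hpos] at hratio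
    rw [one_div_mul_eq_div, le_div_iff₀' hκ]
    exact hratio.le

theorem bayesRisk_eq_risk {f : X → Fin K} (hf : ∀ x, f x ∈ argmaxSet (η x)) :
    bayesRisk P η = risk P η f :=
  integral_congr_ae (ae_of_all _ fun x => congrArg (1 - ·) (hf x).symm)

variable [IsProbabilityMeasure P]

theorem isProbabilityMeasure_jointMeasure (hηt : ∀ x, ηt x ∈ simplex K)
    (hηtm : ∀ i, Measurable fun x => ηt x i) : IsProbabilityMeasure (jointMeasure P ηt) := by
  have sum_ofReal : ∀ x, ∑ j, ENNReal.ofReal (ηt x j) = 1 := fun x => by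
    rw [← ENNReal.ofReal_sum_of_nonneg fun j _ => (hηt x).1 j, (hηt x).2, ENNReal.ofReal_one]
  refine ⟨?_⟩
  calc jointMeasure P ηt Set.univ
      = ∑ j, ∫⁻ x, ENNReal.ofReal (ηt x j) ∂P := by
        rw [jointMeasure, Measure.finsetSum_apply]
        refine Finset.sum_congr rfl fun j _ => ?_
        rw [Measure.map_apply measurable_prodMk_right .univ, Set.preimage_univ,
          withDensity_apply _ .univ, Measure.restrict_univ]
    _ = ∫⁻ x, ∑ j, ENNReal.ofReal (ηt x j) ∂P :=
        (lintegral_finsetSum _ fun j _ => (hηtm j).ennreal_ofReal).symm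
    _ = 1 := by simp [sum_ofReal]

theorem integrable_iSup_sub (hη : ∀ x, η x ∈ simplex K) (hηm : ∀ i, Measurable fun x => η x i)
    {f : X → Fin K} (hf : Measurable f) : Integrable (fun x => (⨆ i, η x i) - η x (f x)) P :=
  .sub
    (.of_mem_Icc 0 1 (Measurable.iSup hηm).aemeasurable
      (ae_of_all _ fun x => iSup_mem_Icc_of_mem_simplex (hη x)))
    (.of_mem_Icc 0 1 (measurable_apply_label hηm measurable_id hf).aemeasurable
      (ae_of_all _ fun x => apply_mem_Icc_of_mem_simplex (hη x) _))

theorem risk_sub_bayesRisk (hη : ∀ x, η x ∈ simplex K) (hηm : ∀ i, Measurable fun x => η x i)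
    {f : X → Fin K} (hf : Measurable f) :
    risk P η f - bayesRisk P η = ∫ x, ((⨆ i, η x i) - η x (f x)) ∂P := by
  have hint : Integrable (fun x => 1 - ⨆ i, η x i) P := (integrable_const 1).sub <|
    .of_mem_Icc 0 1 (Measurable.iSup hηm).aemeasurable
      (ae_of_all _ fun x => iSup_mem_Icc_of_mem_simplex (hη x))
  rw [sub_eq_iff_eq_add, bayesRisk, ← integral_add (integrable_iSup_sub hη hηm hf) hint, risk]
  refine integral_congr_ae (ae_of_all _ fun x => ?_)
  ring

theorem risk_sub_bayesRisk_le (hη : ∀ x, η x ∈ simplex K) (hηt : ∀ x, ηt x ∈ simplex K)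
    (hηm : ∀ i, Measurable fun x => η x i) (hηtm : ∀ i, Measurable fun x => ηt x i)
    {f : X → Fin K} (hf : Measurable f) {κ : ℝ} (hκ : 0 < κ) :
    risk P η f - bayesRisk P η ≤ (P {x | RSS (η x) (ηt x) ≤ ENNReal.ofReal κ}).toReal +
      1 / κ * (risk P ηt f - bayesRisk P ηt) := by
  let S := {x | RSS (η x) (ηt x) ≤ ENNReal.ofReal κ}
  have hS : MeasurableSet S := measurableSet_le (measurable_RSS hηm hηtm) measurable_const
  have hS_int : Integrable (S.indicator 1) P := (integrable_const (1 : ℝ)).indicator hS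
  have noisy_int := (integrable_iSup_sub (P := P) hηt hηtm hf).const_mul (1 / κ)
  have pointwise : ∀ x, (⨆ i, η x i) - η x (f x) ≤
      S.indicator 1 x + 1 / κ * ((⨆ i, ηt x i) - ηt x (f x)) := by
    intro x
    by_cases hx : x ∈ S
    · have hnoisy : 0 ≤ 1 / κ * ((⨆ i, ηt x i) - ηt x (f x)) :=
        mul_nonneg (by positivity) (sub_nonneg.mpr (Finite.le_ciSup _ _))
      rw [Set.indicator_of_mem hx, Pi.one_apply]
      linarith [(hη x).1 (f x), (iSup_mem_Icc_of_mem_simplex (hη x)).2]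
    · rw [Set.indicator_of_notMem hx, zero_add]
      exact iSup_sub_le_of_lt_RSS hκ (not_le.mp hx) (f x)
  calc risk P η f - bayesRisk P η
      = ∫ x, ((⨆ i, η x i) - η x (f x)) ∂P := risk_sub_bayesRisk hη hηm hf
    _ ≤ ∫ x, (S.indicator 1 x + 1 / κ * ((⨆ i, ηt x i) - ηt x (f x))) ∂P :=
        integral_mono (integrable_iSup_sub hη hηm hf) (hS_int.add noisy_int) pointwise
    _ = (P S).toReal + 1 / κ * (risk P ηt f - bayesRisk P ηt) := by
        rw [integral_add hS_int noisy_int, integral_indicator_one hS, integral_const_mul,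
          risk_sub_bayesRisk hηt hηtm hf, measureReal_def]

theorem integrable_risk {Q : Measure Y} [IsFiniteMeasure Q] (hη : ∀ x, η x ∈ simplex K)
    (hηm : ∀ i, Measurable fun x => η x i) {f : Y → X → Fin K}
    (hf : Measurable fun p : Y × X => f p.1 p.2) : Integrable (fun y => risk P η (f y)) Q :=
  ((integrable_const 1).sub (.of_mem_Icc (μ := Q.prod P) 0 1
    (measurable_apply_label hηm measurable_snd hf).aemeasurable
    (ae_of_all _ fun _ => apply_mem_Icc_of_mem_simplex (hη _) _))).integral_prod_left

end Posterior

section EmpiricalRiskMinimization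

variable {X : Type*} {K V n : ℕ}

/-- The zero-one loss of predicting `a` when the label is `b`. -/
def zeroOneLoss (a b : Fin K) : ℝ :=
  if a = b then 0 else 1

theorem zeroOneLoss_mem_Icc (a b : Fin K) : zeroOneLoss a b ∈ Set.Icc 0 1 := by
  unfold zeroOneLoss
  split_ifs <;> simp

theorem sum_zeroOneLoss {ι : Type*} [Fintype ι] (f : X → Fin K) (z : ι → X × Fin K) :
    ∑ i, zeroOneLoss (f (z i).1) (z i).2 =
      (Finset.univ.filter fun i => f (z i).1 ≠ (z i).2).card := by
  simp only [zeroOneLoss, Finset.card_filter, ite_not, Nat.cast_sum, Nat.cast_ite, Nat.cast_zero,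
    Nat.cast_one]

theorem one_add_two_mul_mul_le (hK : 1 ≤ K) (hn : 1 ≤ n) :
    1 + 2 * n * (K * (K - 1)) ≤ n * K ^ 4 := by
  obtain ⟨k, rfl⟩ := Nat.exists_eq_add_of_le hK
  obtain ⟨m, rfl⟩ := Nat.exists_eq_add_of_le hn
  simp only [add_tsub_cancel_left]
  nlinarith [Nat.zero_le (m * k), Nat.zero_le (m * k ^ 2), Nat.zero_le (m * k ^ 3),
    Nat.zero_le (m * k ^ 4), Nat.zero_le (k ^ 3), Nat.zero_le (k ^ 4)]

theorem encard_lossDiff_le {F : Set (X → Fin K)} (hn : 1 ≤ n)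
    (hF : ∀ C : Finset X, NShatters F C → C.card ≤ V)
    (w : Fin n → (X × Fin K) × (X × Fin K)) :
    ((fun (f : X → Fin K) i =>
      zeroOneLoss (f (w i).2.1) (w i).2.2 - zeroOneLoss (f (w i).1.1) (w i).1.2) '' F).encard ≤
        ((n * K ^ 4) ^ V : ℕ) := by
  classical
  set lossDiff : (X → Fin K) → Fin n → ℝ := fun f i =>
    zeroOneLoss (f (w i).2.1) (w i).2.2 - zeroOneLoss (f (w i).1.1) (w i).1.2 with hlossDiff
  have hK : 1 ≤ K := Fin.pos (w ⟨0, hn⟩).1.2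
  let C := Finset.univ.image (fun i => (w i).1.1) ∪ Finset.univ.image fun i => (w i).2.1
  have hC : C.card ≤ 2 * n := calc
    C.card ≤ Finset.card Finset.univ + Finset.card Finset.univ :=
      (Finset.card_union_le _ _).trans (add_le_add Finset.card_image_le Finset.card_image_le)
    _ = 2 * n := by rw [Finset.card_fin, two_mul]
  have hC₁ : ∀ i, (w i).1.1 ∈ C := fun i => by simp [C]
  have hC₂ : ∀ i, (w i).2.1 ∈ C := fun i => by simp [C]
  obtain ⟨H, hcover, hcard⟩ := exists_coversOn_card_le C V F fun S _ => hF S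
  have himage : lossDiff '' F ⊆ H.image lossDiff := by
    rintro _ ⟨f, hf, rfl⟩
    obtain ⟨h, hh, hhf⟩ := hcover f hf
    refine Finset.mem_coe.mpr (Finset.mem_image.mpr ⟨h, hh, funext fun i => ?_⟩)
    simp only [hlossDiff, hhf (hC₁ i), hhf (hC₂ i)]
  have himage_card : (H.image lossDiff).card ≤ (n * K ^ 4) ^ V := calc
    (H.image lossDiff).card ≤ (1 + C.card * (K * (K - 1))) ^ V := Finset.card_image_le.trans hcard
    _ ≤ (1 + 2 * n * (K * (K - 1))) ^ V := by gcongr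
    _ ≤ (n * K ^ 4) ^ V := by
      gcongr
      exact one_add_two_mul_mul_le hK hn
  calc (lossDiff '' F).encard ≤ (H.image lossDiff : Set (Fin n → ℝ)).encard :=
        Set.encard_le_encard himage
    _ ≤ ((n * K ^ 4) ^ V : ℕ) := by
        rw [Set.encard_coe_eq_coe_finsetCard]
        exact_mod_cast himage_card

variable [MeasurableSpace X] {P : Measure X} [IsProbabilityMeasure P] {η ηt : X → Fin K → ℝ}

theorem measurable_zeroOneLoss {Y : Type*} [MeasurableSpace Y] {a b : Y → Fin K}
    (ha : Measurable a) (hb : Measurable b) : Measurable fun y => zeroOneLoss (a y) (b y) :=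
  (Measurable.of_discrete (f := fun p : Fin K × Fin K => zeroOneLoss p.1 p.2)).comp (ha.prodMk hb)

theorem integrable_zeroOneLoss {Q : Measure (X × Fin K)} [IsFiniteMeasure Q] {f : X → Fin K}
    (hf : Measurable f) : Integrable (fun y : X × Fin K => zeroOneLoss (f y.1) y.2) Q :=
  .of_mem_Icc 0 1
    (measurable_zeroOneLoss (hf.comp measurable_fst) measurable_snd).aemeasurable
    (ae_of_all _ fun _ => zeroOneLoss_mem_Icc _ _)

theorem integral_zeroOneLoss (hηt : ∀ x, ηt x ∈ simplex K)
    (hηtm : ∀ i, Measurable fun x => ηt x i) {f : X → Fin K} (hf : Measurable f) :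
    ∫ y, zeroOneLoss (f y.1) y.2 ∂jointMeasure P ηt = risk P ηt f := by
  have := isProbabilityMeasure_jointMeasure (P := P) hηt hηtm
  rw [integral_jointMeasure (h := fun y => zeroOneLoss (f y.1) y.2) (fun x => (hηt x).1) hηtm
    (integrable_zeroOneLoss hf)]
  refine integral_congr_ae (ae_of_all _ fun x => ?_)
  calc ∑ j, ηt x j * zeroOneLoss (f x) j
      = ∑ j, (ηt x j - if f x = j then ηt x j else 0) :=
        Finset.sum_congr rfl fun j _ => by unfold zeroOneLoss; split_ifs <;> simp
    _ = 1 - ηt x (f x) := by simp [(hηt x).2]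

theorem integral_risk_sub_le_sqrt_log (hn : 1 ≤ n) (hηt : ∀ x, ηt x ∈ simplex K)
    (hηtm : ∀ i, Measurable fun x => ηt x i) {F : Set (X → Fin K)}
    (hF : ∀ C : Finset X, NShatters F C → C.card ≤ V) {f₀ : X → Fin K} (hf₀ : Measurable f₀)
    {fhat : (Fin n → X × Fin K) → X → Fin K} (hmem : ∀ z, fhat z ∈ F)
    (hERM : ∀ z, (Finset.univ.filter fun i => fhat z (z i).1 ≠ (z i).2).card ≤
      (Finset.univ.filter fun i => f₀ (z i).1 ≠ (z i).2).card)
    (hfhat : Measurable fun p : (Fin n → X × Fin K) × X => fhat p.1 p.2) :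
    n * ∫ z, (risk P ηt (fhat z) - risk P ηt f₀)
        ∂(Measure.pi fun _ : Fin n => jointMeasure P ηt) ≤
      √(2 * n * Real.log ((n * K ^ 4) ^ V : ℕ)) := by
  have := isProbabilityMeasure_jointMeasure (P := P) hηt hηtm
  have loss_measurable : Measurable fun p : (Fin n → X × Fin K) × (X × Fin K) =>
      zeroOneLoss (fhat p.1 p.2.1) p.2.2 :=
    measurable_zeroOneLoss (hfhat.comp (measurable_fst.prodMk (measurable_fst.comp measurable_snd)))
      (measurable_snd.comp measurable_snd)
  have excess_le := integral_excessLoss_le (μ := jointMeasure P ηt)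
    (g := fun z y => zeroOneLoss (fhat z y.1) y.2) loss_measurable
    (fun _ _ => zeroOneLoss_mem_Icc _ _) (integrable_zeroOneLoss hf₀)
    (fun z => by simpa only [sum_zeroOneLoss, Nat.cast_le] using hERM z)
    (fun w => (Set.encard_le_encard (Set.range_subset_iff.mpr fun z =>
      Set.mem_image_of_mem _ (hmem z))).trans (encard_lossDiff_le hn hF w))
  have fhat_measurable : ∀ z, Measurable (fhat z) := fun z => hfhat.comp measurable_prodMk_left
  simpa only [Fintype.card_fin, integral_zeroOneLoss hηt hηtm hf₀,
    fun z => integral_zeroOneLoss (P := P) hηt hηtm (fhat_measurable z)] using excess_le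

theorem sqrt_log_pow_le (hn : 1 ≤ n) :
    √(2 * n * Real.log ((n * K ^ 4) ^ V : ℕ)) ≤
      n * (16 * √((V * Real.log n + 2 * V * Real.log K + 4) / (2 * n))) := by
  have hn₀ : (0 : ℝ) < n := by exact_mod_cast hn
  have hVn : 0 ≤ V * Real.log n := by positivity
  have hVK : 0 ≤ V * Real.log K := by positivity
  have hlog : Real.log ((n * K ^ 4) ^ V : ℕ) ≤ V * Real.log n + 4 * (V * Real.log K) := by
    rw [Nat.cast_pow, Real.log_pow]
    rcases K.eq_zero_or_pos with rfl | hK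
    · simpa using hVn
    · rw [Nat.cast_mul, Nat.cast_pow, Real.log_mul hn₀.ne' (by positivity), Real.log_pow]
      exact le_of_eq (by push_cast; ring)
  refine Real.sqrt_le_iff.mpr ⟨by positivity, ?_⟩
  calc 2 * n * Real.log ((n * K ^ 4) ^ V : ℕ)
      ≤ 2 * n * (64 * (V * Real.log n + 2 * V * Real.log K + 4)) := by
        gcongr
        linarith
    _ = (n * (16 * √((V * Real.log n + 2 * V * Real.log K + 4) / (2 * n)))) ^ 2 := by
        rw [mul_pow, mul_pow, Real.sq_sqrt (by positivity)]
        field_simp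
        ring

theorem integral_risk_sub_bayesRisk_le (hn : 1 ≤ n) (hη : ∀ x, η x ∈ simplex K)
    (hηt : ∀ x, ηt x ∈ simplex K) (hηm : ∀ i, Measurable fun x => η x i)
    (hηtm : ∀ i, Measurable fun x => ηt x i) {F : Set (X → Fin K)}
    (hF : ∀ C : Finset X, NShatters F C → C.card ≤ V) {ftil : X → Fin K} (hftil : Measurable ftil)
    (hbayes : ∀ x, ftil x ∈ argmaxSet (ηt x))
    {fhat : (Fin n → X × Fin K) → X → Fin K} (hmem : ∀ z, fhat z ∈ F)
    (hERM : ∀ z, (Finset.univ.filter fun i => fhat z (z i).1 ≠ (z i).2).card ≤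
      (Finset.univ.filter fun i => ftil (z i).1 ≠ (z i).2).card)
    (hfhat : Measurable fun p : (Fin n → X × Fin K) × X => fhat p.1 p.2) {κ : ℝ} (hκ : 0 < κ) :
    ∫ z, (risk P η (fhat z) - bayesRisk P η) ∂(Measure.pi fun _ : Fin n => jointMeasure P ηt) ≤
      (P {x | RSS (η x) (ηt x) ≤ ENNReal.ofReal κ}).toReal +
        1 / κ * 16 * √((V * Real.log n + 2 * V * Real.log K + 4) / (2 * n)) := by
  have := isProbabilityMeasure_jointMeasure (P := P) hηt hηtm
  let Q := Measure.pi fun _ : Fin n => jointMeasure P ηt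
  let m := (P {x | RSS (η x) (ηt x) ≤ ENNReal.ofReal κ}).toReal
  have clean_int : Integrable (fun z => risk P η (fhat z) - bayesRisk P η) Q :=
    (integrable_risk hη hηm hfhat).sub (integrable_const _)
  have noisy_int : Integrable (fun z => 1 / κ * (risk P ηt (fhat z) - risk P ηt ftil)) Q :=
    ((integrable_risk hηt hηtm hfhat).sub (integrable_const _)).const_mul _
  have noisy_le : ∫ z, (risk P ηt (fhat z) - risk P ηt ftil) ∂Q ≤
      16 * √((V * Real.log n + 2 * V * Real.log K + 4) / (2 * n)) :=
    le_of_mul_le_mul_left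
      ((integral_risk_sub_le_sqrt_log hn hηt hηtm hF hftil hmem hERM hfhat).trans
        (sqrt_log_pow_le hn)) (by exact_mod_cast hn : (0 : ℝ) < n)
  calc ∫ z, (risk P η (fhat z) - bayesRisk P η) ∂Q
      ≤ ∫ z, (m + 1 / κ * (risk P ηt (fhat z) - risk P ηt ftil)) ∂Q :=
        integral_mono clean_int ((integrable_const _).add noisy_int) fun z => by
          have hz := risk_sub_bayesRisk_le (P := P) hη hηt hηm hηtm
            (hfhat.comp (measurable_prodMk_left (x := z))) hκ
          rwa [bayesRisk_eq_risk hbayes] at hz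
    _ = m + 1 / κ * ∫ z, (risk P ηt (fhat z) - risk P ηt ftil) ∂Q := by
        rw [integral_add (integrable_const _) noisy_int, integral_const_mul]
        simp
    _ ≤ m + 1 / κ * 16 * √((V * Real.log n + 2 * V * Real.log K + 4) / (2 * n)) := by
        rw [mul_assoc]
        gcongr

end EmpiricalRiskMinimization

theorem ni_erm_excess_risk_smooth_margin_general
    {X : Type*} [MeasurableSpace X] {K V n : ℕ} (hn : 1 ≤ n) {ε : ℝ} {φ : ℝ → ℝ}
    {P : Measure X} [IsProbabilityMeasure P] {η ηt : X → Fin K → ℝ}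
    (hη : ∀ x, η x ∈ simplex K) (hηt : ∀ x, ηt x ∈ simplex K)
    (hηm : ∀ i, Measurable fun x => η x i) (hηtm : ∀ i, Measurable fun x => ηt x i)
    (hmargin : ∀ κ : ℝ, 0 < κ →
      (P {x | RSS (η x) (ηt x) ≤ ENNReal.ofReal κ}).toReal ≤ φ κ + ε)
    {F : Set (X → Fin K)} (hF : ∀ C : Finset X, NShatters F C → C.card ≤ V)
    {ftil : X → Fin K} (hftil : Measurable ftil) (hbayes : ∀ x, ftil x ∈ argmaxSet (ηt x))
    {fhat : (Fin n → X × Fin K) → X → Fin K} (hmem : ∀ z, fhat z ∈ F)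
    (hERM : ∀ z, (Finset.univ.filter fun i => fhat z (z i).1 ≠ (z i).2).card ≤
      (Finset.univ.filter fun i => ftil (z i).1 ≠ (z i).2).card)
    (hfhat : Measurable fun p : (Fin n → X × Fin K) × X => fhat p.1 p.2) :
    ∫ z, (risk P η (fhat z) - bayesRisk P η) ∂(Measure.pi fun _ : Fin n => jointMeasure P ηt) ≤
      ε + ⨅ κ : {κ : ℝ // 0 < κ}, (φ κ + 1 / (κ : ℝ) * 16 *
        √((V * Real.log n + 2 * V * Real.log K + 4) / (2 * n))) := by
  have : Nonempty {κ : ℝ // 0 < κ} := ⟨⟨1, one_pos⟩⟩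
  rw [← sub_le_iff_le_add']
  refine le_ciInf fun κ => ?_
  linarith [hmargin κ κ.2,
    integral_risk_sub_bayesRisk_le (P := P) hn hη hηt hηm hηtm hF hftil hbayes hmem hERM hfhat κ.2]

/-- Excess risk upper bound for noise-ignorant ERM under the
`(ε, α, C_α)`-smooth relative signal margin condition:
`E[R(f̂) - R(f*)] ≤ ε + inf_{κ>0} {C_α κ^α + (1/κ)·16·√((V log n + 2V log K + 4)/(2n))}`. -/
theorem ni_erm_excess_risk_smooth_margin
    {X : Type*} [MeasurableSpace X] (K V n : ℕ) (hK : 2 ≤ K) (hn : 1 ≤ n)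
    (ε α Cα : ℝ) (hε : ε ∈ Set.Icc (0 : ℝ) 1) (hα : 0 < α) (hCα : 0 < Cα)
    (P : Measure X) [IsProbabilityMeasure P]
    (η ηt : X → Fin K → ℝ)
    (hη : ∀ x, η x ∈ simplex K) (hηt : ∀ x, ηt x ∈ simplex K)
    (hηm : ∀ i, Measurable fun x => η x i) (hηtm : ∀ i, Measurable fun x => ηt x i)
    (hmargin : ∀ κ : ℝ, 0 < κ →
      (P {x | RSS (η x) (ηt x) ≤ ENNReal.ofReal κ}).toReal ≤ Cα * κ ^ α + ε)
    (F : Set (X → Fin K)) (hFm : ∀ f ∈ F, Measurable f)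
    (hdim_le : ∀ C : Finset X, NShatters F C → C.card ≤ V)
    (hdim_ex : ∃ C : Finset X, NShatters F C ∧ C.card = V)
    (hbayes : ∃ ftil ∈ F, ∀ x, ftil x ∈ argmaxSet (ηt x))
    (fhat : (Fin n → X × Fin K) → X → Fin K)
    (hmem : ∀ z, fhat z ∈ F)
    (hERM : ∀ z, ∀ f ∈ F,
      (Finset.univ.filter fun i => fhat z (z i).1 ≠ (z i).2).card ≤
        (Finset.univ.filter fun i => f (z i).1 ≠ (z i).2).card)
    (hfhat : Measurable fun p : (Fin n → X × Fin K) × X => fhat p.1 p.2) :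
    (∫ z, (risk P η (fhat z) - bayesRisk P η)
        ∂(Measure.pi fun _ : Fin n => jointMeasure P ηt)) ≤
      ε + ⨅ κ : {κ : ℝ // 0 < κ},
        (Cα * (κ : ℝ) ^ α + (1 / (κ : ℝ)) * 16 *
          Real.sqrt ((V * Real.log n + 2 * V * Real.log K + 4) / (2 * n))) := by
  obtain ⟨ftil, hF, hftil⟩ := hbayes
  exact ni_erm_excess_risk_smooth_margin_general hn (φ := fun κ => Cα * κ ^ α) hη hηt hηm hηtm
    hmargin hdim_le (hFm ftil hF) hftil hmem (fun z => hERM z ftil hF) hfhat
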